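/- There exists a constant r₀>0 such that, for all r≥r₀ and all b≥r₀, the Neumann ground state energy vanishes: e_N(b,r)=0. -/

import Mathlib

open MeasureTheory Real Set Filter Topology

noncomputable section

/-- The open square `Q_r = (-r/2, r/2) × (-r/2, r/2)`. -/
def Qsq (r : ℝ) : Set (ℝ × ℝ) := Ioo (-r/2) (r/2) ×ˢ Ioo (-r/2) (r/2)

/-- The vertical strip `S_R = (-R/2, R/2) × ℝ`. -/
def Strip (R : ℝ) : Set (ℝ × ℝ) := Ioo (-R/2) (R/2) ×ˢ (univ : Set ℝ)

/-- The magnetic potential `A₀(x) = (-x₂/2, x₁/2)` of the constant unit magnetic field. -/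
def A₀ (x : ℝ × ℝ) : ℝ × ℝ := (-x.2 / 2, x.1 / 2)

/-- The magnetic potential `A_van(x) = (-x₂²/2, 0)` generating the field `B(x) = x₂`. -/
def Avan (x : ℝ × ℝ) : ℝ × ℝ := (-x.2 ^ 2 / 2, 0)

/-- The magnetic gradient energy density `|(∇ - iA)u|²` at `x`. -/
def magGradSq (A : ℝ × ℝ → ℝ × ℝ) (u : ℝ × ℝ → ℂ) (x : ℝ × ℝ) : ℝ :=
  ‖fderiv ℝ u x (1, 0) - Complex.I * ((A x).1 : ℂ) * u x‖ ^ 2 +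
  ‖fderiv ℝ u x (0, 1) - Complex.I * ((A x).2 : ℂ) * u x‖ ^ 2

/-- The Ginzburg–Landau functional `F_{b,Q_r}` on the square `Q_r`. -/
def Fsq (b r : ℝ) (u : ℝ × ℝ → ℂ) : ℝ :=
  ∫ x in Qsq r, (b * magGradSq A₀ u x - ‖u x‖ ^ 2 + ‖u x‖ ^ 4 / 2)

/-- (Smooth surrogate of) membership in `H¹(Q_r; ℂ)`. -/
def MemH1sq (u : ℝ × ℝ → ℂ) : Prop := ContDiff ℝ 1 u

/-- (Smooth surrogate of) membership in `H¹₀(Q_r; ℂ)`: vanishing on the boundary. -/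
def MemH10sq (r : ℝ) (u : ℝ × ℝ → ℂ) : Prop :=
  ContDiff ℝ 1 u ∧ ∀ x ∈ frontier (Qsq r), u x = 0

/-- The Dirichlet ground-state energy `e_D(b, r)`. -/
def eD (b r : ℝ) : ℝ := sInf (Fsq b r '' {u | MemH10sq r u})

/-- The Neumann ground-state energy `e_N(b, r)`. -/
def eN (b r : ℝ) : ℝ := sInf (Fsq b r '' {u | MemH1sq u})

/-- The energy density of the strip functional `𝓔_{L,R}` at `x`. -/
def stripDensity (L : ℝ) (u : ℝ × ℝ → ℂ) (x : ℝ × ℝ) : ℝ :=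
  magGradSq Avan u x - L ^ (-(2:ℝ)/3) * ‖u x‖ ^ 2 + (L ^ (-(2:ℝ)/3) / 2) * ‖u x‖ ^ 4

/-- The strip functional `𝓔_{L,R}`. -/
def Estrip (L R : ℝ) (u : ℝ × ℝ → ℂ) : ℝ := ∫ x in Strip R, stripDensity L u x

/-- (Surrogate of) membership in the space `H¹_{mag,0}(S_R)`. -/
def MemH1mag0 (R : ℝ) (u : ℝ × ℝ → ℂ) : Prop :=
  ContDiff ℝ 1 u ∧
  IntegrableOn (fun x => ‖u x‖ ^ 2) (Strip R) ∧
  IntegrableOn (magGradSq Avan u) (Strip R) ∧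
  IntegrableOn (fun x => ‖u x‖ ^ 4) (Strip R) ∧
  ∀ x ∈ frontier (Strip R), u x = 0

/-- The ground-state energy `e_gs(L; R)` of the strip functional. -/
def egs (L R : ℝ) : ℝ := sInf (Estrip L R '' {u | MemH1mag0 R u})

/-- `g : (0,∞) → ℝ` is the thermodynamic limit of the Dirichlet square energies. -/
def IsLimitG (g : ℝ → ℝ) : Prop :=
  ∀ b > 0, Tendsto (fun r => eD b r / r ^ 2) atTop (nhds (g b))

/-- `E : (0,∞) → ℝ` is the large-`R` limit of the strip energies. -/
def IsLimitE (E : ℝ → ℝ) : Prop :=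
  ∀ L > 0, Tendsto (fun R => egs L R / R) atTop (nhds (E L))


/-- `ω(x,v) = A₀(x)·v`. -/
def om (x v : ℝ × ℝ) : ℝ := (x.1 * v.2 - x.2 * v.1) / 2

/-- Squared covariant derivative in direction `v`. -/
def GG (u : ℝ × ℝ → ℂ) (v x : ℝ × ℝ) : ℝ :=
  ‖fderiv ℝ u x v - Complex.I * (om x v : ℂ) * u x‖ ^ 2

/-- Difference between the transported value and the value. -/
def PP (u : ℝ × ℝ → ℂ) (v x : ℝ × ℝ) : ℂ :=
  Complex.exp (-(Complex.I * (om x v : ℂ))) * u (x + v) - u x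

lemma GG_cont {u : ℝ × ℝ → ℂ} (hu : ContDiff ℝ 1 u) (v : ℝ × ℝ) : Continuous (GG u v) := by
  have h1 : Continuous (fun x => fderiv ℝ u x v) :=
    (hu.continuous_fderiv (by norm_num)).clm_apply continuous_const
  have h2 := hu.continuous
  unfold GG om
  fun_prop

lemma sq_int_le (g : ℝ → ℂ) (hg : Continuous g) :
    ‖∫ s in (0:ℝ)..1, g s‖ ^ 2 ≤ ∫ s in (0:ℝ)..1, ‖g s‖ ^ 2 := by
  set m := ∫ s in (0:ℝ)..1, ‖g s‖ with hm
  have h1 : ‖∫ s in (0:ℝ)..1, g s‖ ≤ m :=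
    intervalIntegral.norm_integral_le_integral_norm (by norm_num)
  have h2 : ‖∫ s in (0:ℝ)..1, g s‖ ^ 2 ≤ m ^ 2 := by gcongr
  have h3 : 0 ≤ ∫ s in (0:ℝ)..1, (‖g s‖ - m) ^ 2 :=
    intervalIntegral.integral_nonneg (by norm_num) (fun _ _ => sq_nonneg _)
  have h4 : ∫ s in (0:ℝ)..1, (‖g s‖ - m) ^ 2
      = (∫ s in (0:ℝ)..1, ‖g s‖ ^ 2) - m ^ 2 := by
    have e : (fun s => (‖g s‖ - m) ^ 2) = fun s => ‖g s‖ ^ 2 - ((2 * m) * ‖g s‖ - m ^ 2) := by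
      funext s; ring
    rw [e, intervalIntegral.integral_sub, intervalIntegral.integral_sub,
      intervalIntegral.integral_const_mul, ← hm]
    · simp; ring
    all_goals exact Continuous.intervalIntegrable (by fun_prop) _ _
  linarith

lemma PP_le {u : ℝ × ℝ → ℂ} (hu : ContDiff ℝ 1 u) (v x : ℝ × ℝ) :
    ‖PP u v x‖ ^ 2 ≤ ∫ s in (0:ℝ)..1, GG u v (x + s • v) := by
  set a := om x v with ha
  set g' : ℝ → ℂ := fun s => Complex.exp (-(Complex.I * (a : ℂ)) * s) *
    (fderiv ℝ u (x + s • v) v - Complex.I * (a : ℂ) * u (x + s • v)) with hg'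
  have hc : Continuous g' := by
    have h1 : Continuous (fun s : ℝ => fderiv ℝ u (x + s • v) v) :=
      ((hu.continuous_fderiv (by norm_num)).comp (by fun_prop)).clm_apply continuous_const
    have h2 := hu.continuous
    simp only [hg']
    fun_prop
  have hd : ∀ s : ℝ, HasDerivAt
      (fun s : ℝ => Complex.exp (-(Complex.I * (a : ℂ)) * s) * u (x + s • v)) (g' s) s := by
    intro s
    have e1 : HasDerivAt (fun s : ℝ => Complex.exp (-(Complex.I * (a : ℂ)) * s))
        (Complex.exp (-(Complex.I * (a : ℂ)) * s) * (-(Complex.I * (a : ℂ)) * 1)) s :=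
      ((Complex.ofRealCLM.hasDerivAt (x := s)).const_mul (-(Complex.I * (a : ℂ)))).cexp
    have e2 : HasDerivAt (fun s : ℝ => x + s • v) v s := by
      simpa using ((hasDerivAt_id s).smul_const v).const_add x
    have e3 : HasDerivAt (fun s : ℝ => u (x + s • v)) (fderiv ℝ u (x + s • v) v) s :=
      ((hu.differentiable (by norm_num)) _).hasFDerivAt.comp_hasDerivAt s e2
    refine (e1.mul e3).congr_deriv ?_
    change _ = Complex.exp (-(Complex.I * (a : ℂ)) * s) *
      (fderiv ℝ u (x + s • v) v - Complex.I * (a : ℂ) * u (x + s • v))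
    ring
  have hf := intervalIntegral.integral_eq_sub_of_hasDerivAt (a := 0) (b := 1)
    (fun s _ => hd s) (hc.intervalIntegrable _ _)
  have hP : PP u v x = ∫ s in (0:ℝ)..1, g' s := by
    rw [hf]; simp [PP, ← ha]
  rw [hP]
  refine (sq_int_le g' hc).trans (le_of_eq ?_)
  congr 1
  funext s
  have hom : om (x + s • v) v = a := by
    simp [ha, om]; ring
  simp only [hg', GG, hom, norm_mul]
  rw [Complex.norm_exp]
  simp

lemma loop_le (u : ℝ × ℝ → ℂ) (x v w : ℝ × ℝ) (h : |om v w| = 1 / 2) :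
    ‖u x‖ ^ 2 ≤ 16 * (‖PP u v x‖ ^ 2 + ‖PP u w (x + v)‖ ^ 2 + ‖PP u w x‖ ^ 2
      + ‖PP u v (x + w)‖ ^ 2) := by
  set E : ℝ → ℂ := fun t => Complex.exp (-(Complex.I * (t : ℂ))) with hE
  have Eadd : ∀ s t, E s * E t = E (s + t) := by
    intro s t; simp only [hE]; rw [← Complex.exp_add]; congr 1; push_cast; ring
  have En : ∀ t, ‖E t‖ = 1 := by
    intro t; simp only [hE]; rw [Complex.norm_exp]; simp
  set o := om v w with ho
  set z := u (x + v + w) with hz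
  have o1 : om (x + v) w = om x w + o := by simp [ho, om]; ring
  have o2 : om (x + w) v = om x v - o := by simp [ho, om]; ring
  have id1 : E (om x v) * PP u w (x + v) + PP u v x
      = E (om x v + om x w + o) * z - u x := by
    have : E (om x v + om x w + o) = E (om x v) * E (om x w + o) := by rw [Eadd]; congr 1; ring
    rw [this]
    simp only [PP, o1, hz]
    simp only [hE]; ring
  have id2 : E (om x w) * PP u v (x + w) + PP u w x
      = E (om x v + om x w - o) * z - u x := by
    have : E (om x v + om x w - o) = E (om x w) * E (om x v - o) := by rw [Eadd]; congr 1; ring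
    rw [this]
    simp only [PP, o2, hz]
    rw [show x + w + v = x + v + w by abel]
    simp only [hE]; ring
  have id3 : E o * (E (om x w) * PP u v (x + w) + PP u w x)
      - E (-o) * (E (om x v) * PP u w (x + v) + PP u v x) = (E (-o) - E o) * u x := by
    rw [id1, id2]
    have a1 : E o * E (om x v + om x w - o) = E (om x v + om x w) := by
      rw [Eadd]; congr 1; ring
    have a2 : E (-o) * E (om x v + om x w + o) = E (om x v + om x w) := by
      rw [Eadd]; congr 1; ring
    linear_combination z * a1 - z * a2
  have hs : (1:ℝ) / 2 ≤ ‖E (-o) - E o‖ := by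
    have e : E (-o) - E o = ((2 * Real.sin o : ℝ) : ℂ) * Complex.I := by
      simp only [hE]
      rw [show -(Complex.I * ((-o : ℝ) : ℂ)) = (o : ℂ) * Complex.I by push_cast; ring,
        show -(Complex.I * (o : ℂ)) = ((-o : ℝ) : ℂ) * Complex.I by push_cast; ring,
        Complex.exp_mul_I, Complex.exp_mul_I]
      push_cast
      rw [Complex.cos_neg, Complex.sin_neg]; ring
    rw [e, norm_mul, Complex.norm_I, mul_one, Complex.norm_real, Real.norm_eq_abs, abs_mul]
    have hsin : (1:ℝ) / 4 ≤ Real.sin (1 / 2) := by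
      have := Real.sin_gt_sub_cube (x := 1 / 2) (by norm_num)
      norm_num at this ⊢; linarith
    have : (1:ℝ) / 4 ≤ |Real.sin o| := by
      rcases (abs_eq (by norm_num : (0:ℝ) ≤ 1 / 2)).1 h with h | h
      · rw [h]; exact hsin.trans (le_abs_self _)
      · rw [h, Real.sin_neg, abs_neg]; exact hsin.trans (le_abs_self _)
    rw [abs_of_pos (by norm_num : (0:ℝ) < 2)]; linarith
  have hn : ‖(E (-o) - E o) * u x‖ ≤ ‖PP u v (x + w)‖ + ‖PP u w x‖
      + (‖PP u w (x + v)‖ + ‖PP u v x‖) := by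
    rw [← id3]
    refine (norm_sub_le _ _).trans ?_
    rw [norm_mul, norm_mul, En, En, one_mul, one_mul]
    refine add_le_add ((norm_add_le _ _).trans ?_) ((norm_add_le _ _).trans ?_) <;>
    rw [norm_mul, En, one_mul]
  rw [norm_mul] at hn
  have hq : 1 / 2 * ‖u x‖ ≤ ‖PP u v (x + w)‖ + ‖PP u w x‖
      + (‖PP u w (x + v)‖ + ‖PP u v x‖) :=
    (mul_le_mul_of_nonneg_right hs (norm_nonneg _)).trans hn
  have hsq := pow_le_pow_left₀ (by positivity) hq 2
  set a := ‖PP u v (x + w)‖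
  set b := ‖PP u w x‖
  set c := ‖PP u w (x + v)‖
  set d := ‖PP u v x‖
  nlinarith [sq_nonneg (a - b), sq_nonneg (a - c), sq_nonneg (a - d), sq_nonneg (b - c),
    sq_nonneg (b - d), sq_nonneg (c - d)]

lemma PP_lint {u : ℝ × ℝ → ℂ} (hu : ContDiff ℝ 1 u) (v y : ℝ × ℝ) (q Q : Set (ℝ × ℝ))
    (hq : MeasurableSet q) (hQ : MeasurableSet Q)
    (h : ∀ x ∈ q, ∀ s ∈ Icc (0:ℝ) 1, x + y + s • v ∈ Q) :
    ∫⁻ x in q, ENNReal.ofReal (‖PP u v (x + y)‖ ^ 2) ≤ ∫⁻ x in Q, ENNReal.ofReal (GG u v x) := by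
  have hG := GG_cont hu v
  have hG0 : ∀ x, 0 ≤ GG u v x := fun x => by unfold GG; positivity
  have step1 : ∀ x, ENNReal.ofReal (‖PP u v (x + y)‖ ^ 2)
      ≤ ∫⁻ s in Ioc (0:ℝ) 1, ENNReal.ofReal (GG u v (x + y + s • v)) := by
    intro x
    refine (ENNReal.ofReal_le_ofReal (PP_le hu v (x + y))).trans ?_
    rw [intervalIntegral.integral_of_le (by norm_num), ofReal_integral_eq_lintegral_ofReal]
    · have : Continuous (fun s : ℝ => GG u v (x + y + s • v)) := by fun_prop
      exact (this.intervalIntegrable 0 1).1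
    · exact Eventually.of_forall fun s => hG0 _
  calc ∫⁻ x in q, ENNReal.ofReal (‖PP u v (x + y)‖ ^ 2)
      ≤ ∫⁻ x in q, ∫⁻ s in Ioc (0:ℝ) 1, ENNReal.ofReal (GG u v (x + y + s • v)) :=
        lintegral_mono step1
    _ = ∫⁻ s in Ioc (0:ℝ) 1, ∫⁻ x in q, ENNReal.ofReal (GG u v (x + y + s • v)) := by
        apply lintegral_lintegral_swap
        apply Measurable.aemeasurable
        apply ENNReal.measurable_ofReal.comp
        apply Continuous.measurable
        apply hG.comp
        fun_prop
    _ ≤ ∫⁻ s in Ioc (0:ℝ) 1, ∫⁻ x in Q, ENNReal.ofReal (GG u v x) := by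
        apply setLIntegral_mono' measurableSet_Ioc
        intro s hs
        rw [← lintegral_indicator hq, ← lintegral_indicator hQ,
          ← lintegral_add_right_eq_self (Q.indicator fun x => ENNReal.ofReal (GG u v x))
            (y + s • v)]
        apply lintegral_mono
        intro x
        by_cases hx : x ∈ q
        · have := h x hx s ⟨hs.1.le, hs.2⟩
          rw [add_assoc] at this
          simp [hx, this, add_assoc]
        · simp [hx]
    _ = ∫⁻ x in Q, ENNReal.ofReal (GG u v x) := by simp

/-- Pieces of the square. -/
def quad (r e d : ℝ) : Set (ℝ × ℝ) := {x | x ∈ Qsq r ∧ e * x.1 ≤ 0 ∧ d * x.2 ≤ 0}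

lemma Qsq_meas (r : ℝ) : MeasurableSet (Qsq r) := measurableSet_Ioo.prod measurableSet_Ioo

lemma quad_meas (r e d : ℝ) : MeasurableSet (quad r e d) := by
  refine (Qsq_meas r).inter (MeasurableSet.inter ?_ ?_)
  · exact measurableSet_le (f := fun x : ℝ × ℝ => e * x.1) (g := fun _ => 0)
      (by fun_prop) (by fun_prop)
  · exact measurableSet_le (f := fun x : ℝ × ℝ => d * x.2) (g := fun _ => 0)
      (by fun_prop) (by fun_prop)

lemma coord_shift (r e t s : ℝ) (hr : 2 < r) (he : e = 1 ∨ e = -1) (ht : t ∈ Ioo (-r/2) (r/2))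
    (h : e * t ≤ 0) (hs : s ∈ Icc (0:ℝ) 1) : t + s * e ∈ Ioo (-r/2) (r/2) := by
  obtain ⟨h1, h2⟩ := ht
  obtain ⟨h3, h4⟩ := hs
  rcases he with rfl | rfl <;> constructor <;> linarith

lemma quad_le {u : ℝ × ℝ → ℂ} (hu : ContDiff ℝ 1 u) (r e d : ℝ) (hr : 2 < r)
    (he : e = 1 ∨ e = -1) (hd : d = 1 ∨ d = -1) :
    ∫⁻ x in quad r e d, ENNReal.ofReal (‖u x‖ ^ 2)
      ≤ 32 * ∫⁻ x in Qsq r, ENNReal.ofReal (magGradSq A₀ u x) := by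
  set v : ℝ × ℝ := (e, 0) with hv
  set w : ℝ × ℝ := (0, d) with hw
  have hom : |om v w| = 1 / 2 := by
    rcases he with rfl | rfl <;> rcases hd with rfl | rfl <;> norm_num [om, hv, hw, abs_div]
  have key : ∀ x ∈ quad r e d, ∀ s ∈ Icc (0:ℝ) 1, ∀ t ∈ Icc (0:ℝ) 1,
      (x.1 + s * e, x.2 + t * d) ∈ Qsq r := by
    intro x hx s hs t ht
    exact ⟨coord_shift r e x.1 s hr he hx.1.1 hx.2.1 hs,
      coord_shift r d x.2 t hr hd hx.1.2 hx.2.2 ht⟩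
  have z0 : (0:ℝ) ∈ Icc (0:ℝ) 1 := by simp
  have z1 : (1:ℝ) ∈ Icc (0:ℝ) 1 := by simp
  have mq := quad_meas r e d
  have mQ := Qsq_meas r
  have b1 := PP_lint hu v 0 _ _ mq mQ (fun x hx s hs => by
    have := key x hx s hs 0 z0
    convert this using 1
    ext <;> simp [hv])
  have b2 := PP_lint hu w v _ _ mq mQ (fun x hx s hs => by
    have := key x hx 1 z1 s hs
    convert this using 1
    ext <;> simp [hv, hw])
  have b3 := PP_lint hu w 0 _ _ mq mQ (fun x hx s hs => by
    have := key x hx 0 z0 s hs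
    convert this using 1
    ext <;> simp [hw])
  have b4 := PP_lint hu v w _ _ mq mQ (fun x hx s hs => by
    have := key x hx s hs 1 z1
    convert this using 1
    ext <;> simp [hv, hw])
  simp only [add_zero] at b1 b3
  have hPm : ∀ v y, Measurable fun x => ENNReal.ofReal (‖PP u v (x + y)‖ ^ 2) := by
    intro v y
    have h2 := hu.continuous
    apply ENNReal.measurable_ofReal.comp
    apply Continuous.measurable
    unfold PP om
    fun_prop
  have hPm0 : ∀ v, Measurable fun x => ENNReal.ofReal (‖PP u v x‖ ^ 2) := by
    intro v; simpa using hPm v 0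
  have hmag : ∀ x, ENNReal.ofReal (magGradSq A₀ u x)
      = ENNReal.ofReal (GG u v x) + ENNReal.ofReal (GG u w x) := by
    intro x
    rw [← ENNReal.ofReal_add (by unfold GG; positivity) (by unfold GG; positivity)]
    congr 1
    unfold magGradSq GG
    have f1 : fderiv ℝ u x v = (e : ℂ) * fderiv ℝ u x (1, 0) := by
      have : v = e • ((1:ℝ), (0:ℝ)) := by simp [hv]
      rw [this, map_smul, Complex.real_smul]
    have f2 : fderiv ℝ u x w = (d : ℂ) * fderiv ℝ u x (0, 1) := by
      have : w = d • ((0:ℝ), (1:ℝ)) := by simp [hw]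
      rw [this, map_smul, Complex.real_smul]
    have g1 : fderiv ℝ u x v - Complex.I * (om x v : ℂ) * u x
        = (e : ℂ) * (fderiv ℝ u x (1, 0) - Complex.I * ((A₀ x).1 : ℂ) * u x) := by
      rw [f1]; simp only [om, A₀, hv]; push_cast; ring
    have g2 : fderiv ℝ u x w - Complex.I * (om x w : ℂ) * u x
        = (d : ℂ) * (fderiv ℝ u x (0, 1) - Complex.I * ((A₀ x).2 : ℂ) * u x) := by
      rw [f2]; simp only [om, A₀, hw]; push_cast; ring
    have ne : ‖(e : ℂ)‖ = 1 := by rcases he with rfl | rfl <;> simp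
    have nd : ‖(d : ℂ)‖ = 1 := by rcases hd with rfl | rfl <;> simp
    rw [g1, g2, norm_mul, norm_mul, ne, nd, one_mul, one_mul]
  have hGm : Measurable fun x => ENNReal.ofReal (GG u v x) :=
    ENNReal.measurable_ofReal.comp (GG_cont hu v).measurable
  calc ∫⁻ x in quad r e d, ENNReal.ofReal (‖u x‖ ^ 2)
      ≤ ∫⁻ x in quad r e d, 16 * (ENNReal.ofReal (‖PP u v x‖ ^ 2)
        + ENNReal.ofReal (‖PP u w (x + v)‖ ^ 2) + ENNReal.ofReal (‖PP u w x‖ ^ 2)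
        + ENNReal.ofReal (‖PP u v (x + w)‖ ^ 2)) := by
        apply lintegral_mono
        intro x
        refine (ENNReal.ofReal_le_ofReal (loop_le u x v w hom)).trans (le_of_eq ?_)
        rw [ENNReal.ofReal_mul (by norm_num), ENNReal.ofReal_add (by positivity) (by positivity),
          ENNReal.ofReal_add (by positivity) (by positivity),
          ENNReal.ofReal_add (by positivity) (by positivity)]
        norm_num
    _ ≤ 16 * (∫⁻ x in Qsq r, ENNReal.ofReal (GG u v x)) +
        16 * (∫⁻ x in Qsq r, ENNReal.ofReal (GG u w x)) +
        16 * (∫⁻ x in Qsq r, ENNReal.ofReal (GG u w x)) +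
        16 * (∫⁻ x in Qsq r, ENNReal.ofReal (GG u v x)) := by
        rw [lintegral_const_mul' _ _ (by norm_num),
          lintegral_add_right _ (hPm v w), lintegral_add_right _ (hPm0 w),
          lintegral_add_right _ (hPm w v), mul_add, mul_add, mul_add]
        gcongr
    _ = 32 * ∫⁻ x in Qsq r, ENNReal.ofReal (magGradSq A₀ u x) := by
        simp_rw [hmag]
        rw [lintegral_add_left hGm]
        ring

lemma full_le {u : ℝ × ℝ → ℂ} (hu : ContDiff ℝ 1 u) (r : ℝ) (hr : 2 < r) :
    ∫⁻ x in Qsq r, ENNReal.ofReal (‖u x‖ ^ 2)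
      ≤ 128 * ∫⁻ x in Qsq r, ENNReal.ofReal (magGradSq A₀ u x) := by
  have hsub : Qsq r ⊆ (quad r 1 1 ∪ quad r 1 (-1)) ∪ (quad r (-1) 1 ∪ quad r (-1) (-1)) := by
    intro x hx
    simp only [mem_union, quad, mem_ofPred_eq, hx, true_and]
    rcases le_total x.1 0 with h1 | h1 <;> rcases le_total x.2 0 with h2 | h2
    · left; left; constructor <;> linarith
    · left; right; constructor <;> linarith
    · right; left; constructor <;> linarith
    · right; right; constructor <;> linarith
  refine (lintegral_mono_set hsub).trans ?_
  refine (lintegral_union_le _ _ _).trans ?_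
  refine (add_le_add (lintegral_union_le _ _ _) (lintegral_union_le _ _ _)).trans ?_
  refine (add_le_add (add_le_add (quad_le hu r 1 1 hr (by simp) (by simp))
    (quad_le hu r 1 (-1) hr (by simp) (by simp)))
    (add_le_add (quad_le hu r (-1) 1 hr (by simp) (by simp))
    (quad_le hu r (-1) (-1) hr (by simp) (by simp)))).trans (le_of_eq ?_)
  ring

lemma cont_intOn {f : ℝ × ℝ → ℝ} (hf : Continuous f) (r : ℝ) : IntegrableOn f (Qsq r) := by
  have hK : IsCompact (Icc (-r/2) (r/2) ×ˢ Icc (-r/2) (r/2)) := isCompact_Icc.prod isCompact_Icc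
  exact (hf.continuousOn.integrableOn_compact hK).mono_set
    (prod_mono Ioo_subset_Icc_self Ioo_subset_Icc_self)

lemma mag_cont {u : ℝ × ℝ → ℂ} (hu : ContDiff ℝ 1 u) : Continuous (magGradSq A₀ u) := by
  have h1 : ∀ v, Continuous (fun x => fderiv ℝ u x v) := fun v =>
    (hu.continuous_fderiv (by norm_num)).clm_apply continuous_const
  have h2 := hu.continuous
  have h3 := h1 (1, 0)
  have h4 := h1 (0, 1)
  unfold magGradSq A₀
  fun_prop

lemma real_le {u : ℝ × ℝ → ℂ} (hu : ContDiff ℝ 1 u) (r : ℝ) (hr : 2 < r) :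
    ∫ x in Qsq r, ‖u x‖ ^ 2 ≤ 128 * ∫ x in Qsq r, magGradSq A₀ u x := by
  have h2 := hu.continuous
  have hm0 : ∀ x, 0 ≤ magGradSq A₀ u x := fun x => by unfold magGradSq; positivity
  have h := full_le hu r hr
  rw [← ofReal_integral_eq_lintegral_ofReal (cont_intOn (by fun_prop) r)
      (Eventually.of_forall fun x => by positivity),
    ← ofReal_integral_eq_lintegral_ofReal (cont_intOn (mag_cont hu) r)
      (Eventually.of_forall hm0),
    show (128 : ENNReal) = ENNReal.ofReal 128 by norm_num,
    ← ENNReal.ofReal_mul (by norm_num)] at h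
  exact (ENNReal.ofReal_le_ofReal_iff
    (mul_nonneg (by norm_num) (integral_nonneg hm0))).1 h

lemma Fsq_nonneg {u : ℝ × ℝ → ℂ} (hu : ContDiff ℝ 1 u) (b r : ℝ) (hr : 2 < r) (hb : 128 ≤ b) :
    0 ≤ Fsq b r u := by
  have h2 := hu.continuous
  have hm := mag_cont hu
  have hm0 : ∀ x, 0 ≤ magGradSq A₀ u x := fun x => by unfold magGradSq; positivity
  have h := real_le hu r hr
  have hI : 0 ≤ ∫ x in Qsq r, magGradSq A₀ u x := integral_nonneg hm0
  have h4 : 0 ≤ ∫ x in Qsq r, ‖u x‖ ^ 4 / 2 := integral_nonneg fun x => by positivity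
  unfold Fsq
  rw [integral_add (cont_intOn (by fun_prop) r) (cont_intOn (by fun_prop) r),
    integral_sub (cont_intOn (by fun_prop) r) (cont_intOn (by fun_prop) r),
    integral_const_mul]
  nlinarith

/-- The Neumann energy vanishes for large `b` and `r`. -/
theorem eN_eq_zero : ∃ r₀ > (0:ℝ), ∀ r ≥ r₀, ∀ b ≥ r₀, eN b r = 0 := by
  refine ⟨128, by norm_num, fun r hr b hb => ?_⟩
  have hl : IsLeast (Fsq b r '' {u | MemH1sq u}) 0 := by
    constructor
    · refine ⟨fun _ => 0, (contDiff_const : ContDiff ℝ 1 (fun _ : ℝ × ℝ => (0:ℂ))), ?_⟩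
      simp [Fsq, magGradSq]
    · rintro _ ⟨u, hu, rfl⟩
      exact Fsq_nonneg hu b r (by linarith) hb
  exact hl.csInf_eq

end
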